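/- One-dimensional early-time Duhamel estimate: fix 2 < r ≤ ∞. For any t > 0, any measurable interval I ⊆ [0, t/2], and any measurable u : I × ℝ → ℂ, one has ‖ ∫_I e^{i(t−s)Δ} (|u|⁴u)(s) ds ‖_{L^r_x(ℝ)} ≤ C t^{−(1/2−1/r)} ( sup_{s ∈ I} s^{1/2−1/r} ‖u(s)‖_{L^r_x(ℝ)} ) ‖u‖⁴_{L^{8r/(r+2),4}_s L^{4r/(r−2)}_x(I×ℝ)}, with C depending only on r. -/

import Mathlib

open MeasureTheory Set
open scoped ENNReal Real

noncomputable section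

/-- The free Schrödinger propagator `e^{itΔ}` acting on functions on a `d`-dimensional space:
for `t ≠ 0`, `(e^{itΔ}f)(x) = (4πit)^{-d/2} ∫ e^{i|x-y|²/(4t)} f(y) dy`, and `e^{i0Δ}f = f`. -/
def schrod {E : Type*} [NormedAddCommGroup E] [MeasureSpace E] (d : ℕ) (t : ℝ) (f : E → ℂ) :
    E → ℂ :=
  if t = 0 then f
  else fun x =>
    (4 * (Real.pi : ℂ) * Complex.I * (t : ℂ)) ^ (-(d : ℂ) / 2) *
      ∫ y, Complex.exp (Complex.I * ((‖x - y‖ ^ 2 : ℝ) : ℂ) / (4 * (t : ℂ))) * f y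

/-- Mixed Lebesgue norm `‖u‖_{L^p_t L^q_x (I × space)}`. -/
def mixedNorm {α : Type*} [MeasurableSpace α] (ν : Measure α) (I : Set ℝ) (p q : ℝ≥0∞)
    (u : ℝ → α → ℂ) : ℝ≥0∞ :=
  if p = ∞ then essSup (fun t => eLpNorm (u t) q ν) (volume.restrict I)
  else (∫⁻ t in I, eLpNorm (u t) q ν ^ p.toReal) ^ (1 / p.toReal)

/-- Lorentz quasinorm `p^{1/q} ‖ λ · ν({g > λ})^{1/p} ‖_{L^q((0,∞), dλ/λ)}`
for an `ℝ≥0∞`-valued function `g`. -/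
def lorentzNorm {α : Type*} [MeasurableSpace α] (ν : Measure α) (p q : ℝ≥0∞)
    (g : α → ℝ≥0∞) : ℝ≥0∞ :=
  if q = ∞ then
    ⨆ l ∈ Set.Ioi (0 : ℝ), ENNReal.ofReal l * ν {x | ENNReal.ofReal l < g x} ^ p⁻¹.toReal
  else
    (p * ∫⁻ l in Set.Ioi (0 : ℝ),
        (ENNReal.ofReal l * ν {x | ENNReal.ofReal l < g x} ^ p⁻¹.toReal) ^ q.toReal /
          ENNReal.ofReal l) ^ q⁻¹.toReal

/-- Lorentz quasinorm `‖f‖_{L^{p,q}}` of a scalar function. -/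
def lorentzNormC {α : Type*} [MeasurableSpace α] (ν : Measure α) (p q : ℝ≥0∞)
    (f : α → ℂ) : ℝ≥0∞ :=
  lorentzNorm ν p q fun x => (‖f x‖₊ : ℝ≥0∞)

/-- Lorentz-in-time mixed norm `‖u‖_{L^{p,q}_t L^r_x (I × space)}`. -/
def lorentzMixedNorm {α : Type*} [MeasurableSpace α] (ν : Measure α) (I : Set ℝ)
    (p q r : ℝ≥0∞) (u : ℝ → α → ℂ) : ℝ≥0∞ :=
  lorentzNorm (volume.restrict I) p q fun t => eLpNorm (u t) r ν

/-- The nonlinearity `|f|^a f`. -/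
def nonlin {E : Type*} (a : ℝ) (f : E → ℂ) : E → ℂ := fun x => ((‖f x‖ ^ a : ℝ) : ℂ) * f x


section
open scoped FourierTransform SchwartzMap

lemma aux_plancherel (f : ℝ → ℂ) (hf : Integrable f) (hf2 : MemLp f 2) :
    eLpNorm (𝓕 f) 2 volume = eLpNorm f 2 volume := by
  set F : Lp (α := ℝ) ℂ 2 := hf2.toLp f with hF
  have hcont : Continuous (𝓕 f) :=
    VectorFourier.fourierIntegral_continuous Real.continuous_fourierChar
      (by exact continuous_inner) hf
  have key : ∀ᵐ x : ℝ, ((𝓕 F : Lp (α := ℝ) ℂ 2 volume) : ℝ → ℂ) x = (𝓕 f) x := by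
    apply ae_eq_of_integral_contDiff_smul_eq
    · exact (Lp.memLp (𝓕 F)).locallyIntegrable (by norm_num)
    · exact hcont.locallyIntegrable
    · intro g hg1 hg2
      have h2 : HasCompactSupport (Complex.ofRealCLM ∘ g) := hg2.comp_left rfl
      set φ : 𝓢(ℝ, ℂ) := h2.toSchwartzMap (by fun_prop) with hφ
      have e1 := congrArg (fun T => T φ) (Lp.fourier_toTemperedDistribution_eq F)
      simp only [TemperedDistribution.fourier_apply, Lp.toTemperedDistribution_apply] at e1
      have e2 : ∫ x, (𝓕 (φ : ℝ → ℂ)) x • f x = ∫ x, φ x • (𝓕 f) x := by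
        have := VectorFourier.integral_fourierIntegral_smul_eq_flip (μ := (volume : Measure ℝ)) (ν := (volume : Measure ℝ))
          (L := innerₗ ℝ) (f := (φ : ℝ → ℂ)) (g := f) Real.continuous_fourierChar
          (by exact continuous_inner) φ.integrable hf
        rw [flip_innerₗ] at this
        exact this
      have e3 : ∫ x, (𝓕 φ) x • F x = ∫ x, (𝓕 (φ : ℝ → ℂ)) x • f x := by
        apply integral_congr_ae
        filter_upwards [hf2.coeFn_toLp] with x hx
        rw [hF, hx, SchwartzMap.fourier_coe]
      have h4 : ∀ x, φ x = (g x : ℂ) := fun x => rfl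
      simp only [h4] at e1 e2 
      rw [e3, e2] at e1
      simpa [Complex.real_smul] using e1.symm
  have h5 : ‖𝓕 F‖ = ‖F‖ := Lp.norm_fourier_eq F
  rw [← eLpNorm_congr_ae key, ← eLpNorm_congr_ae hf2.coeFn_toLp]
  rw [← Lp.enorm_def, ← Lp.enorm_def, ← hF, ← ofReal_norm, ← ofReal_norm, h5]
end

lemma aux_int_pow (k b : ℝ) (hk : 0 < k) (hb : 0 ≤ b) :
    ∫⁻ l in Ioo 0 b, ENNReal.ofReal (k * l ^ (k-1)) = ENNReal.ofReal (b ^ k) := by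
  have h1 : IntervalIntegrable (fun l : ℝ => l ^ (k-1)) volume 0 b :=
    intervalIntegral.intervalIntegrable_rpow' (by linarith)
  rw [← ofReal_integral_eq_lintegral_ofReal]
  · rw [← integral_Ioc_eq_integral_Ioo, ← intervalIntegral.integral_of_le hb,
      intervalIntegral.integral_const_mul, integral_rpow (Or.inl (by linarith))]
    congr 1
    rw [sub_add_cancel, Real.zero_rpow hk.ne']
    field_simp
    ring
  · exact ((h1.1).mono_set Ioo_subset_Ioc_self).const_mul k
  · filter_upwards [ae_restrict_mem measurableSet_Ioo] with x hx
    have := hx.1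
    simp only [Pi.zero_apply]
    positivity

lemma aux_layer (k : ℝ) (hk : 0 < k) (a : ℝ≥0∞) :
    a ^ k ≤ ∫⁻ l in Ioi (0:ℝ), ENNReal.ofReal (k * l ^ (k-1)) *
      (if ENNReal.ofReal l < a then 1 else 0) := by
  have main : ∀ b : ℝ, 0 ≤ b → ENNReal.ofReal b ≤ a → ENNReal.ofReal b ^ k ≤
      ∫⁻ l in Ioi (0:ℝ), ENNReal.ofReal (k * l ^ (k-1)) *
      (if ENNReal.ofReal l < a then 1 else 0) := by
    intro b hb hba
    rw [ENNReal.ofReal_rpow_of_nonneg hb hk.le, ← aux_int_pow k b hk hb]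
    calc ∫⁻ l in Ioo 0 b, ENNReal.ofReal (k * l ^ (k-1)) = ∫⁻ l in Ioo 0 b, ENNReal.ofReal (k * l ^ (k-1)) *
      (if ENNReal.ofReal l < a then 1 else 0) := by
          apply setLIntegral_congr_fun measurableSet_Ioo
          intro l hl
          have : ENNReal.ofReal l < a := lt_of_lt_of_le ((ENNReal.ofReal_lt_ofReal_iff_of_nonneg hl.1.le).2 hl.2) hba
          simp [this]
      _ ≤ _ := lintegral_mono_set Ioo_subset_Ioi_self
  by_cases ha : a = ∞
  · suffices h : (∫⁻ l in Ioi (0:ℝ), ENNReal.ofReal (k * l ^ (k-1)) *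
      (if ENNReal.ofReal l < a then 1 else 0)) = ∞ by rw [h]; exact le_top
    apply ENNReal.eq_top_of_forall_nnreal_le
    intro c
    have := main ((c:ℝ) ^ (1/k)) (by positivity) (by simp [ha])
    rwa [ENNReal.ofReal_rpow_of_nonneg (by positivity) hk.le, ← Real.rpow_mul (NNReal.coe_nonneg c), one_div,
      inv_mul_cancel₀ hk.ne', Real.rpow_one, ENNReal.ofReal_coe_nnreal] at this
  · have := main a.toReal (by simp) (by rw [ENNReal.ofReal_toReal ha])
    rwa [ENNReal.ofReal_toReal ha] at this

section
open scoped FourierTransform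

lemma aux_fourier_cont (f : ℝ → ℂ) (hf : Integrable f) : Continuous (𝓕 f) :=
    VectorFourier.fourierIntegral_continuous Real.continuous_fourierChar
      (by exact continuous_inner) hf

lemma aux_weak (f : ℝ → ℂ) (hm : Measurable f) (hf : Integrable f) (ρ a : ℝ) (hρ : 2 < ρ)
    (ha : 0 < a) (hA : ∫⁻ x, ‖f x‖ₑ ^ (ρ / (ρ - 1)) = ENNReal.ofReal a) (l : ℝ) (hl : 0 < l) :
    volume {x | ENNReal.ofReal l < ‖𝓕 f x‖ₑ} ≤
      ENNReal.ofReal (4 * l ^ (-2 : ℝ)) * ∫⁻ x, if ‖f x‖ ≤ (2 * a / l) ^ (ρ - 1) then ‖f x‖ₑ ^ (2:ℝ) else 0 := by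
  set h : ℝ := (2 * a / l) ^ (ρ - 1) with hh
  have hpos : 0 < h := by positivity
  set p : ℝ := ρ / (ρ - 1) with hp
  have hp1 : p - 1 = 1 / (ρ - 1) := by
    rw [hp]; have : ρ - 1 ≠ 0 := by linarith
    field_simp; ring
  have hhp : h ^ (p - 1) = 2 * a / l := by
    rw [hh, hp1, ← Real.rpow_mul (by positivity), mul_one_div_cancel (by linarith), Real.rpow_one]
  set s : Set ℝ := {x | ‖f x‖ ≤ h} with hs
  have hsm : MeasurableSet s := measurableSet_le hm.norm measurable_const
  set flo := s.indicator f with hflo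
  set fhi := sᶜ.indicator f with hfhi
  have ilo : Integrable flo := hf.indicator hsm
  have ihi : Integrable fhi := hf.indicator hsm.compl
  have hsum : f = fhi + flo := by
    rw [hflo, hfhi, add_comm]; exact (indicator_self_add_compl s f).symm
  have hF : ∀ x, 𝓕 f x = 𝓕 fhi x + 𝓕 flo x := by
    intro x
    have : 𝓕 (fhi + flo) = 𝓕 fhi + 𝓕 flo := VectorFourier.fourierIntegral_add Real.continuous_fourierChar
      (by exact continuous_inner) ihi ilo
    conv_lhs => rw [hsum, this]
    rfl
  have hhi : ∀ x, ‖𝓕 fhi x‖ₑ ≤ ENNReal.ofReal (l / 2) := by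
    intro x
    have h1 : ‖𝓕 fhi x‖ ≤ ∫ v, ‖fhi v‖ := VectorFourier.norm_fourierIntegral_le_integral_norm _ _ _ _ _
    have h2 : ENNReal.ofReal (2 * a / l) * ∫⁻ v, ‖fhi v‖ₑ ≤ ENNReal.ofReal a := by
      rw [← hA, ← lintegral_const_mul' _ _ ENNReal.ofReal_ne_top]
      apply lintegral_mono
      intro v
      by_cases hv : v ∈ s
      · simp [hfhi, hv]
      · have hv' : h < ‖f v‖ := by simpa [hs] using hv
        have : fhi v = f v := by simp [hfhi, hv]
        simp only [this]
        have hfv : 0 < ‖f v‖ := hpos.trans hv'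
        rw [← ofReal_norm, ENNReal.ofReal_rpow_of_pos hfv, ← ENNReal.ofReal_mul (by positivity)]
        apply ENNReal.ofReal_le_ofReal
        rw [← hhp]
        calc h ^ (p-1) * ‖f v‖ ≤ ‖f v‖ ^ (p-1) * ‖f v‖ := by
              gcongr
              rw [hp1]; apply div_nonneg <;> linarith
          _ = ‖f v‖ ^ p := by
              rw [← Real.rpow_add_one hfv.ne']; congr 1; ring
    rw [← ofReal_integral_norm_eq_lintegral_enorm ihi, ← ENNReal.ofReal_mul (by positivity),
      ENNReal.ofReal_le_ofReal_iff ha.le] at h2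
    rw [← ofReal_norm]
    apply ENNReal.ofReal_le_ofReal
    refine h1.trans ?_
    rw [div_mul_eq_mul_div, div_le_iff₀ hl] at h2
    nlinarith
  have hlo2 : ∀ x, ‖flo x‖ ≤ h := by
    intro x
    by_cases hx : x ∈ s
    · simp only [hflo, hx, indicator_of_mem]; exact hx
    · simp [hflo, hx, hpos.le]
  have mlo : MemLp flo 2 := by
    rw [memLp_two_iff_integrable_sq_norm ilo.aestronglyMeasurable]
    refine (ilo.norm.const_mul h).mono' (by have := ilo.aestronglyMeasurable; fun_prop) (ae_of_all _ fun x => ?_)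
    have := hlo2 x
    have h0 := norm_nonneg (flo x)
    rw [Real.norm_of_nonneg (by positivity)]
    nlinarith
  have hpl := aux_plancherel flo ilo mlo
  rw [eLpNorm_eq_lintegral_rpow_enorm_toReal (by norm_num) (by norm_num),
    eLpNorm_eq_lintegral_rpow_enorm_toReal (by norm_num) (by norm_num)] at hpl
  have hpl2 : ∫⁻ x, ‖𝓕 flo x‖ₑ ^ (2:ℝ) = ∫⁻ x, ‖flo x‖ₑ ^ (2:ℝ) := by
    have := congrArg (fun y => y ^ (2:ℝ)) hpl
    simp only [← ENNReal.rpow_mul] at this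
    norm_num at this
    simpa using this
  have hsub : {x | ENNReal.ofReal l < ‖𝓕 f x‖ₑ} ⊆ {x | ENNReal.ofReal (l/2) ^ (2:ℝ) ≤ ‖𝓕 flo x‖ₑ ^ (2:ℝ)} := by
    intro x hx
    simp only [mem_ofPred_eq] at hx ⊢
    gcongr
    by_contra hc
    push Not at hc
    have : ‖𝓕 f x‖ₑ ≤ ENNReal.ofReal l := by
      calc ‖𝓕 f x‖ₑ ≤ ‖𝓕 fhi x‖ₑ + ‖𝓕 flo x‖ₑ := by rw [hF]; exact enorm_add_le _ _
        _ ≤ ENNReal.ofReal (l/2) + ENNReal.ofReal (l/2) := add_le_add (hhi x) hc.le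
        _ = ENNReal.ofReal l := by rw [← ENNReal.ofReal_add (by positivity) (by positivity)]; simp
    exact absurd hx (not_lt.2 this)
  have hmk := mul_meas_ge_le_lintegral (μ := volume) (f := fun x => ‖𝓕 flo x‖ₑ ^ (2:ℝ))
    (by have := (aux_fourier_cont flo ilo).measurable; fun_prop) (ENNReal.ofReal (l/2) ^ (2:ℝ))
  rw [hpl2] at hmk
  have hconst : ENNReal.ofReal (4 * l ^ (-2 : ℝ)) * ENNReal.ofReal (l/2) ^ (2:ℝ) = 1 := by
    rw [ENNReal.ofReal_rpow_of_pos (by positivity), ← ENNReal.ofReal_mul (by positivity)]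
    rw [Real.rpow_neg hl.le]
    simp only [Real.rpow_ofNat]
    field_simp; norm_num
  have hint : ∫⁻ x, ‖flo x‖ₑ ^ (2:ℝ) = ∫⁻ x, if ‖f x‖ ≤ h then ‖f x‖ₑ ^ (2:ℝ) else 0 := by
    congr 1; ext x
    by_cases hx : x ∈ s
    · have hx' : ‖f x‖ ≤ h := hx
      simp only [hflo, hx, indicator_of_mem, hx', if_true]
    · have hx' : ¬ ‖f x‖ ≤ h := hx
      simp [hflo, hx, hx']
  rw [← hint]
  calc _ ≤ volume {x | ENNReal.ofReal (l/2) ^ (2:ℝ) ≤ ‖𝓕 flo x‖ₑ ^ (2:ℝ)} := measure_mono hsub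
    _ = ENNReal.ofReal (4 * l ^ (-2 : ℝ)) * (ENNReal.ofReal (l/2) ^ (2:ℝ) * volume {x | ENNReal.ofReal (l/2) ^ (2:ℝ) ≤ ‖𝓕 flo x‖ₑ ^ (2:ℝ)}) := by
      rw [← mul_assoc, hconst, one_mul]
    _ ≤ _ := by gcongr

lemma aux_inner (ρ a y : ℝ) (hρ : 2 < ρ) (ha : 0 < a) (hy : 0 < y) :
    ∫⁻ l in Ioi (0:ℝ), ENNReal.ofReal (ρ * l ^ (ρ - 1)) * (ENNReal.ofReal (4 * l ^ (-2 : ℝ)) *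
      (if y ≤ (2 * a / l) ^ (ρ - 1) then ENNReal.ofReal y ^ (2:ℝ) else 0)) ≤
    ENNReal.ofReal (4 * ρ / (ρ - 2) * (2 * a) ^ (ρ - 2)) * ENNReal.ofReal y ^ (ρ / (ρ - 1)) := by
  set M : ℝ := 2 * a * y ^ (-(1/(ρ-1))) with hM
  have hM0 : 0 < M := by positivity
  have h1 : ∀ l ∈ Ioi (0:ℝ), ENNReal.ofReal (ρ * l ^ (ρ - 1)) * (ENNReal.ofReal (4 * l ^ (-2 : ℝ)) *
      (if y ≤ (2 * a / l) ^ (ρ - 1) then ENNReal.ofReal y ^ (2:ℝ) else 0)) ≤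
      (Iic M).indicator (fun l => ENNReal.ofReal (4 * ρ / (ρ - 2) * y ^ (2:ℝ)) * ENNReal.ofReal ((ρ - 2) * l ^ ((ρ - 2) - 1))) l := by
    intro l hl
    have hl : 0 < l := hl
    split_ifs with hc
    · have hlM : l ≤ M := by
        have : y ^ (1/(ρ-1)) ≤ 2 * a / l := by
          calc y ^ (1/(ρ-1)) ≤ ((2 * a / l) ^ (ρ - 1)) ^ (1/(ρ-1)) := by
                apply Real.rpow_le_rpow hy.le hc; apply div_nonneg <;> linarith
            _ = _ := by rw [← Real.rpow_mul (by positivity), mul_one_div_cancel (by linarith), Real.rpow_one]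
        rw [hM, Real.rpow_neg hy.le, ← div_eq_mul_inv]
        rw [le_div_iff₀ hl] at this
        rw [le_div_iff₀ (by positivity)]; linarith
      rw [indicator_of_mem (show l ∈ Iic M from hlM)]
      rw [ENNReal.ofReal_rpow_of_pos hy, ← ENNReal.ofReal_mul (by positivity), ← ENNReal.ofReal_mul (by positivity),
        ← ENNReal.ofReal_mul (by have : 0 < ρ - 2 := by linarith
                                 positivity)]
      apply le_of_eq; congr 1
      have e : l ^ (ρ - 2 - 1) = l ^ (ρ - 1) * l ^ (-2:ℝ) := by
        rw [← Real.rpow_add hl]; congr 1; ring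
      rw [e]
      have : ρ - 2 ≠ 0 := by linarith
      field_simp
    · simp
  calc _ ≤ ∫⁻ l in Ioi (0:ℝ), (Iic M).indicator (fun l => ENNReal.ofReal (4 * ρ / (ρ - 2) * y ^ (2:ℝ)) * ENNReal.ofReal ((ρ - 2) * l ^ ((ρ - 2) - 1))) l :=
        setLIntegral_mono' measurableSet_Ioi h1
    _ = ∫⁻ l in Ioo 0 M, ENNReal.ofReal (4 * ρ / (ρ - 2) * y ^ (2:ℝ)) * ENNReal.ofReal ((ρ - 2) * l ^ ((ρ - 2) - 1)) := by
        rw [setLIntegral_indicator measurableSet_Iic, inter_comm, Ioi_inter_Iic, setLIntegral_congr Ioo_ae_eq_Ioc]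
    _ = ENNReal.ofReal (4 * ρ / (ρ - 2) * y ^ (2:ℝ)) * ENNReal.ofReal (M ^ (ρ - 2)) := by
        rw [lintegral_const_mul' _ _ ENNReal.ofReal_ne_top, aux_int_pow _ _ (by linarith) hM0.le]
    _ = _ := by
        have h2 : 0 < ρ - 2 := by linarith
        rw [ENNReal.ofReal_rpow_of_pos hy, ← ENNReal.ofReal_mul (by positivity), ← ENNReal.ofReal_mul (by positivity)]
        congr 1
        rw [hM, Real.mul_rpow (by positivity) (by positivity), ← Real.rpow_mul hy.le]
        have : y ^ (ρ / (ρ - 1)) = y ^ (2:ℝ) * y ^ (-(1 / (ρ - 1)) * (ρ - 2)) := by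
          rw [← Real.rpow_add hy]; congr 1
          have : ρ - 1 ≠ 0 := by linarith
          field_simp; ring
        rw [this]; ring

lemma aux_HY (f : ℝ → ℂ) (hm : Measurable f) (hf : Integrable f) (ρ : ℝ) (hρ : 2 < ρ) :
    ∫⁻ x, ‖𝓕 f x‖ₑ ^ ρ ≤ ENNReal.ofReal (4 * ρ / (ρ - 2) * 2 ^ (ρ - 2)) *
      (∫⁻ x, ‖f x‖ₑ ^ (ρ / (ρ - 1))) ^ (ρ - 1) := by
  set A := ∫⁻ x, ‖f x‖ₑ ^ (ρ / (ρ - 1)) with hA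
  have h2 : 0 < ρ - 2 := by linarith
  have h1 : 0 < ρ - 1 := by linarith
  have hρ0 : 0 < ρ := by linarith
  have hc : 0 < 4 * ρ / (ρ - 2) * 2 ^ (ρ - 2) := by positivity
  by_cases hAt : A = ∞
  · rw [hAt, ENNReal.top_rpow_of_pos h1, ENNReal.mul_top (by simpa using hc)]; exact le_top
  by_cases hA0 : A = 0
  · have : ∀ᵐ x, f x = 0 := by
      have := (lintegral_eq_zero_iff (by fun_prop)).1 (hA.symm.trans hA0)
      filter_upwards [this] with x hx
      have : 0 < ρ / (ρ-1) := by positivity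
      simpa [this, this.not_gt] using hx
    have h0 : ∀ x, 𝓕 f x = 0 := by
      intro x
      rw [Real.fourier_real_eq]
      apply integral_eq_zero_of_ae
      filter_upwards [this] with y hy
      simp [hy]
    simp [h0, hρ0]
  set a := A.toReal with ha'
  have ha : 0 < a := ENNReal.toReal_pos hA0 hAt
  have hAa : A = ENNReal.ofReal a := (ENNReal.ofReal_toReal hAt).symm
  have hFm : Measurable (𝓕 f) := (aux_fourier_cont f hf).measurable
  calc ∫⁻ x, ‖𝓕 f x‖ₑ ^ ρ ≤ ∫⁻ x, ∫⁻ l in Ioi (0:ℝ), ENNReal.ofReal (ρ * l ^ (ρ-1)) *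
      (if ENNReal.ofReal l < ‖𝓕 f x‖ₑ then 1 else 0) := lintegral_mono fun x => aux_layer ρ hρ0 _
    _ = ∫⁻ l in Ioi (0:ℝ), ∫⁻ x, ENNReal.ofReal (ρ * l ^ (ρ-1)) *
      (if ENNReal.ofReal l < ‖𝓕 f x‖ₑ then 1 else 0) := by
        apply lintegral_lintegral_swap
        apply Measurable.aemeasurable
        apply Measurable.mul
        · fun_prop
        · exact Measurable.ite (measurableSet_lt (by fun_prop) (by fun_prop)) measurable_const measurable_const
    _ = ∫⁻ l in Ioi (0:ℝ), ENNReal.ofReal (ρ * l ^ (ρ-1)) * volume {x | ENNReal.ofReal l < ‖𝓕 f x‖ₑ} := by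
        congr 1; ext l
        rw [lintegral_const_mul' _ _ ENNReal.ofReal_ne_top]
        congr 1
        rw [← lintegral_indicator_one (measurableSet_lt (by fun_prop) (by fun_prop))]
        congr 1; ext x
        simp only [indicator, mem_ofPred_eq, Pi.one_apply]
    _ ≤ ∫⁻ l in Ioi (0:ℝ), ENNReal.ofReal (ρ * l ^ (ρ-1)) * (ENNReal.ofReal (4 * l ^ (-2 : ℝ)) * ∫⁻ x, if ‖f x‖ ≤ (2 * a / l) ^ (ρ - 1) then ‖f x‖ₑ ^ (2:ℝ) else 0) := by
        apply setLIntegral_mono' measurableSet_Ioi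
        intro l hl
        gcongr
        exact aux_weak f hm hf ρ a hρ ha (hA.symm.trans hAa) l hl
    _ = ∫⁻ l in Ioi (0:ℝ), ∫⁻ x, ENNReal.ofReal (ρ * l ^ (ρ-1)) * (ENNReal.ofReal (4 * l ^ (-2 : ℝ)) * if ‖f x‖ ≤ (2 * a / l) ^ (ρ - 1) then ‖f x‖ₑ ^ (2:ℝ) else 0) := by
        congr 1; ext l
        rw [lintegral_const_mul' _ _ ENNReal.ofReal_ne_top, lintegral_const_mul' _ _ ENNReal.ofReal_ne_top]
    _ = ∫⁻ x, ∫⁻ l in Ioi (0:ℝ), ENNReal.ofReal (ρ * l ^ (ρ-1)) * (ENNReal.ofReal (4 * l ^ (-2 : ℝ)) * if ‖f x‖ ≤ (2 * a / l) ^ (ρ - 1) then ‖f x‖ₑ ^ (2:ℝ) else 0) := by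
        apply lintegral_lintegral_swap
        apply Measurable.aemeasurable
        apply Measurable.mul
        · fun_prop
        apply Measurable.mul
        · fun_prop
        · exact Measurable.ite (measurableSet_le (by fun_prop) (by fun_prop)) (by fun_prop) measurable_const
    _ ≤ ∫⁻ x, ENNReal.ofReal (4 * ρ / (ρ - 2) * (2 * a) ^ (ρ - 2)) * ‖f x‖ₑ ^ (ρ / (ρ - 1)) := by
        apply lintegral_mono
        intro x
        by_cases hx : f x = 0
        · simp [hx]
        · have := aux_inner ρ a ‖f x‖ hρ ha (by simpa using hx)
          rw [ofReal_norm] at this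
          exact this
    _ = _ := by
        rw [lintegral_const_mul' _ _ ENNReal.ofReal_ne_top, ← hA, hAa, ENNReal.ofReal_rpow_of_pos ha,
          ← ENNReal.ofReal_mul (by positivity), ← ENNReal.ofReal_mul (by positivity)]
        congr 1
        have : a ^ (ρ - 1) = a ^ (ρ - 2) * a := by
          rw [← Real.rpow_add_one ha.ne']; congr 1; ring
        rw [this, Real.mul_rpow (by positivity) ha.le]; ring
end

section
open scoped FourierTransform

lemma aux_const (T : ℝ) (hT : 0 < T) :
    ‖(4 * (Real.pi : ℂ) * Complex.I * (T : ℂ)) ^ (-((1:ℕ) : ℂ) / 2)‖ = (4 * π * T) ^ (-(1/2) : ℝ) := by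
  have : (-((1:ℕ) : ℂ) / 2) = ((-(1/2) : ℝ) : ℂ) := by push_cast; ring
  rw [this, Complex.norm_cpow_real]
  congr 1
  simp [abs_of_pos Real.pi_pos, abs_of_pos hT]

lemma aux_phase (z c : ℝ) : ‖Complex.exp (Complex.I * (z:ℂ) / (4 * (c : ℂ)))‖ = 1 := by
  have : Complex.I * (z:ℂ) / (4 * (c : ℂ)) = ((z / (4 * c) : ℝ) : ℂ) * Complex.I := by
    push_cast; ring
  rw [this, Complex.norm_exp_ofReal_mul_I]

lemma aux_disp_top (T : ℝ) (hT : 0 < T) (f : ℝ → ℂ) (x : ℝ) :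
    ‖schrod 1 T f x‖ₑ ≤ ENNReal.ofReal ((4 * π * T) ^ (-(1/2) : ℝ)) * ∫⁻ y, ‖f y‖ₑ := by
  rw [schrod, if_neg hT.ne', enorm_mul, ← ofReal_norm, aux_const T hT]
  gcongr
  refine (enorm_integral_le_lintegral_enorm _).trans (lintegral_mono fun y => ?_)
  rw [enorm_mul, ← ofReal_norm (Complex.exp _), aux_phase]
  simp

lemma aux_schrod_fourier (T : ℝ) (hT : 0 < T) (f : ℝ → ℂ) (x : ℝ) :
    ‖schrod 1 T f x‖ₑ = ENNReal.ofReal ((4 * π * T) ^ (-(1/2) : ℝ)) *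
      ‖𝓕 (fun y : ℝ => Complex.exp (Complex.I * ((y^2 : ℝ) : ℂ) / (4 * (T : ℂ))) * f y) ((4 * π * T)⁻¹ * x)‖ₑ := by
  rw [schrod, if_neg hT.ne', enorm_mul, ← ofReal_norm, aux_const T hT]
  congr 1
  rw [Real.fourier_real_eq]
  have : ∀ y : ℝ, Complex.exp (Complex.I * ((‖x - y‖ ^ 2 : ℝ) : ℂ) / (4 * (T : ℂ))) * f y =
     Complex.exp (Complex.I * ((x ^ 2 : ℝ) : ℂ) / (4 * (T : ℂ))) *
     (Real.fourierChar (-(y * ((4 * π * T)⁻¹ * x))) • (Complex.exp (Complex.I * ((y^2 : ℝ) : ℂ) / (4 * (T : ℂ))) * f y)) := by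
    intro y
    rw [Circle.smul_def, Real.fourierChar_apply, smul_eq_mul, ← mul_assoc, ← mul_assoc, ← Complex.exp_add, ← Complex.exp_add]
    congr 2
    have hT' : (T:ℂ) ≠ 0 := by exact_mod_cast hT.ne'
    have hpi : (π:ℂ) ≠ 0 := by exact_mod_cast Real.pi_ne_zero
    rw [Real.norm_eq_abs, sq_abs]
    push_cast
    field_simp
    ring
  simp_rw [this]
  rw [integral_const_mul, enorm_mul, ← ofReal_norm (Complex.exp _), aux_phase]
  simp

lemma aux_disp (T : ℝ) (hT : 0 < T) (f : ℝ → ℂ) (hm : Measurable f) (ρ : ℝ) (hρ : 2 < ρ) :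
    ∫⁻ x, ‖schrod 1 T f x‖ₑ ^ ρ ≤ ENNReal.ofReal ((4 * π * T) ^ (1 - ρ / 2) * (4 * ρ / (ρ - 2) * 2 ^ (ρ - 2))) *
      (∫⁻ x, ‖f x‖ₑ ^ (ρ / (ρ - 1))) ^ (ρ - 1) := by
  have hρ0 : 0 < ρ := by linarith
  have hρ2 : 0 < ρ - 2 := by linarith
  by_cases hi : Integrable f
  · set g : ℝ → ℂ := fun y : ℝ => Complex.exp (Complex.I * ((y^2 : ℝ) : ℂ) / (4 * (T : ℂ))) * f y with hg
    have hgn : ∀ y, ‖g y‖ = ‖f y‖ := by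
      intro y; rw [hg]; simp only; rw [norm_mul, aux_phase, one_mul]
    have hge : ∀ y, ‖g y‖ₑ = ‖f y‖ₑ := by
      intro y; rw [← ofReal_norm, hgn, ofReal_norm]
    have hgm : Measurable g := by fun_prop
    have hgi : Integrable g := by
      refine hi.norm.mono' hgm.aestronglyMeasurable (ae_of_all _ fun y => ?_)
      rw [hgn]
    have hHY := aux_HY g hgm hgi ρ hρ
    simp only [hge] at hHY
    simp only [aux_schrod_fourier T hT f, ← hg]
    have hFm : Measurable (𝓕 g) := (aux_fourier_cont g hgi).measurable
    simp only [ENNReal.mul_rpow_of_nonneg _ _ hρ0.le]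
    rw [lintegral_const_mul' _ _ (by simp [hρ0.le])]
    have hch : ∫⁻ x, ‖𝓕 g ((4 * π * T)⁻¹ * x)‖ₑ ^ ρ = ENNReal.ofReal (4 * π * T) * ∫⁻ x, ‖𝓕 g x‖ₑ ^ ρ := by
      have hne : (4 * π * T)⁻¹ ≠ 0 := by positivity
      have h1 := lintegral_map (μ := volume) (f := fun x => ‖𝓕 g x‖ₑ ^ ρ) (g := fun x => (4 * π * T)⁻¹ * x)
        (by fun_prop) (by fun_prop)
      rw [← h1, Real.map_volume_mul_left hne, lintegral_smul_measure, inv_inv, abs_of_pos (by positivity), smul_eq_mul]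
    rw [hch, ENNReal.ofReal_rpow_of_pos (by positivity), ← mul_assoc, ← ENNReal.ofReal_mul (by positivity),
      ENNReal.ofReal_mul (p := (4 * π * T) ^ (1 - ρ / 2)) (by positivity),
      mul_assoc (ENNReal.ofReal ((4 * π * T) ^ (1 - ρ / 2)))]
    have : ((4 * π * T) ^ (-(1/2):ℝ)) ^ ρ * (4 * π * T) = (4 * π * T) ^ (1 - ρ / 2) := by
      rw [← Real.rpow_mul (by positivity), ← Real.rpow_add_one (by positivity)]
      congr 1; ring
    rw [this]
    gcongr
  · have h0 : ∀ x, schrod 1 T f x = 0 := by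
      intro x
      rw [schrod, if_neg hT.ne']
      rw [integral_undef, mul_zero]
      intro hc
      apply hi
      refine hc.norm.mono' hm.aestronglyMeasurable (ae_of_all _ fun y => ?_)
      rw [norm_mul, aux_phase, one_mul]
    simp [h0, hρ0]

lemma aux_nonlin (v : ℝ → ℂ) (x : ℝ) : ‖nonlin 4 v x‖ₑ = ‖v x‖ₑ ^ (4:ℝ) * ‖v x‖ₑ := by
  rw [nonlin, enorm_mul]
  congr 1
  rw [← ofReal_norm, ← ofReal_norm, ENNReal.ofReal_rpow_of_nonneg (norm_nonneg _) (by norm_num)]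
  rw [Complex.norm_real, Real.norm_of_nonneg (by positivity)]

lemma aux_holder (v : ℝ → ℂ) (hv : Measurable v) (ρ : ℝ) (hρ : 2 < ρ) :
    (∫⁻ x, ‖nonlin 4 v x‖ₑ ^ (ρ / (ρ - 1))) ^ (ρ - 1) ≤
      (∫⁻ x, ‖v x‖ₑ ^ ρ) * (∫⁻ x, ‖v x‖ₑ ^ (4 * ρ / (ρ - 2))) ^ (ρ - 2) := by
  have h1 : 0 < ρ - 1 := by linarith
  have h2 : 0 < ρ - 2 := by linarith
  have hρ0 : 0 < ρ := by linarith
  have hconj : (ρ - 1).HolderConjugate ((ρ - 1) / (ρ - 2)) := by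
    rw [Real.holderConjugate_iff]
    refine ⟨by linarith, ?_⟩
    field_simp; ring
  have := ENNReal.lintegral_mul_le_Lp_mul_Lq volume hconj
    (f := fun x => ‖v x‖ₑ ^ (ρ / (ρ - 1))) (g := fun x => ‖v x‖ₑ ^ (4 * (ρ / (ρ - 1)))) (by fun_prop) (by fun_prop)
  simp only [Pi.mul_apply, ← ENNReal.rpow_mul] at this
  have e1 : ρ / (ρ - 1) * (ρ - 1) = ρ := by field_simp
  have e2 : 4 * (ρ / (ρ - 1)) * ((ρ - 1) / (ρ - 2)) = 4 * ρ / (ρ - 2) := by field_simp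
  rw [e1, e2] at this
  calc _ = (∫⁻ x, ‖v x‖ₑ ^ (ρ / (ρ - 1)) * ‖v x‖ₑ ^ (4 * (ρ / (ρ - 1)))) ^ (ρ - 1) := by
        congr 2; ext x
        rw [aux_nonlin, ENNReal.mul_rpow_of_nonneg _ _ (by positivity), ← ENNReal.rpow_mul, mul_comm]
    _ ≤ _ := ENNReal.rpow_le_rpow this h1.le
    _ = _ := by
      rw [ENNReal.mul_rpow_of_nonneg _ _ h1.le, ← ENNReal.rpow_mul, ← ENNReal.rpow_mul]
      congr 1
      · rw [one_div_mul_cancel h1.ne', ENNReal.rpow_one]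
      · congr 1; field_simp

lemma aux_meas_schrod (t : ℝ) (u : ℝ → ℝ → ℂ) (hu : Measurable (Function.uncurry u)) (I : Set ℝ)
    (hI : ∀ s ∈ I, s < t) (hIm : MeasurableSet I) :
    Measurable (Function.uncurry fun s x => I.indicator (fun s => ‖schrod 1 (t - s) (nonlin 4 (u s)) x‖ₑ) s) := by
  have hm : Measurable (fun q : ℝ × ℝ => ‖(4 * (Real.pi : ℂ) * Complex.I * ((t - q.1 : ℝ) : ℂ)) ^ (-((1:ℕ) : ℂ) / 2) *
      ∫ y, Complex.exp (Complex.I * ((‖q.2 - y‖ ^ 2 : ℝ) : ℂ) / (4 * ((t - q.1 : ℝ) : ℂ))) * nonlin 4 (u q.1) y‖ₑ) := by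
    apply Measurable.enorm
    apply Measurable.mul
    · fun_prop
    · apply StronglyMeasurable.measurable
      apply StronglyMeasurable.integral_prod_right' (f := fun z : (ℝ × ℝ) × ℝ => Complex.exp (Complex.I * ((‖z.1.2 - z.2‖ ^ 2 : ℝ) : ℂ) / (4 * ((t - z.1.1 : ℝ) : ℂ))) * nonlin 4 (u z.1.1) z.2)
      apply Measurable.stronglyMeasurable
      unfold nonlin
      have h3 : Measurable (fun z : (ℝ × ℝ) × ℝ => u z.1.1 z.2) :=
        hu.comp (by fun_prop : Measurable (fun z : (ℝ × ℝ) × ℝ => (z.1.1, z.2)))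
      fun_prop
  have := hm.indicator (hIm.prod MeasurableSet.univ)
  convert this using 1
  ext ⟨s, x⟩
  by_cases h : s ∈ I
  · have h1 : t - s ≠ 0 := by have := hI s h; linarith
    have h2 : (s, x) ∈ I ×ˢ (univ : Set ℝ) := ⟨h, trivial⟩
    rw [indicator_of_mem h2]
    simp only [Function.uncurry, indicator_of_mem h]
    rw [schrod, if_neg h1]
  · have h2 : (s, x) ∉ I ×ˢ (univ : Set ℝ) := fun h' => h h'.1
    rw [indicator_of_notMem h2]
    simp only [Function.uncurry, indicator_of_notMem h]
end

lemma aux_mink0 (μ : Measure ℝ) [IsFiniteMeasure μ] (F : ℝ → ℝ → ℝ≥0∞) (hF : Measurable (Function.uncurry F))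
    (w : ℝ → ℝ≥0∞) (hw : Measurable w) (ρ : ℝ) (hρ : 1 < ρ)
    (hpos : ∀ᵐ s ∂μ, w s ≠ 0 ∧ w s ≠ ∞)
    (hb : ∀ᵐ s ∂μ, ∫⁻ x, F s x ^ ρ ≤ w s ^ ρ) :
    ∫⁻ x, (∫⁻ s, F s x ∂μ) ^ ρ ≤ (∫⁻ s, w s ∂μ) ^ ρ := by
  have h1 : 0 < ρ - 1 := by linarith
  have hρ0 : 0 < ρ := by linarith
  have hconj : ρ.HolderConjugate (ρ / (ρ - 1)) := by
    rw [Real.holderConjugate_iff]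
    refine ⟨by linarith, ?_⟩
    field_simp; ring
  have hF1 : ∀ x, Measurable fun s => F s x := fun x => hF.comp (by fun_prop : Measurable fun s : ℝ => (s, x))
  have hF2 : ∀ s, Measurable fun x => F s x := fun s => hF.comp (by fun_prop : Measurable fun x : ℝ => (s, x))
  have key : ∀ x, (∫⁻ s, F s x ∂μ) ^ ρ ≤ (∫⁻ s, F s x ^ ρ * w s ^ (-(ρ - 1)) ∂μ) * (∫⁻ s, w s ∂μ) ^ (ρ - 1) := by
    intro x
    have hx := hF1 x
    have := ENNReal.lintegral_mul_le_Lp_mul_Lq μ hconj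
      (f := fun s => F s x * w s ^ (-((ρ - 1) / ρ))) (g := fun s => w s ^ ((ρ - 1)/ρ)) (by fun_prop) (by fun_prop)
    have e : ∫⁻ s, F s x ∂μ = ∫⁻ a, ((fun s => F s x * w s ^ (-((ρ - 1) / ρ))) * fun s => w s ^ ((ρ - 1)/ρ)) a ∂μ := by
      apply lintegral_congr_ae
      filter_upwards [hpos] with s hs
      simp only [Pi.mul_apply]
      rw [mul_assoc, ← ENNReal.rpow_add _ _ hs.1 hs.2]
      simp
    rw [e]
    refine (ENNReal.rpow_le_rpow this hρ0.le).trans (le_of_eq ?_)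
    rw [ENNReal.mul_rpow_of_nonneg _ _ hρ0.le, ← ENNReal.rpow_mul, ← ENNReal.rpow_mul, one_div_mul_cancel hρ0.ne', ENNReal.rpow_one]
    congr 1
    · congr 1; ext s
      rw [ENNReal.mul_rpow_of_nonneg _ _ hρ0.le, ← ENNReal.rpow_mul]
      congr 2; field_simp
    · congr 1
      · congr 1; ext s
        rw [← ENNReal.rpow_mul]
        have : (ρ - 1) / ρ * (ρ / (ρ - 1)) = 1 := by field_simp
        rw [this, ENNReal.rpow_one]
      · field_simp
  have hm2 : Measurable (Function.uncurry fun x s => F s x ^ ρ * w s ^ (-(ρ - 1))) := by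
    have : Measurable fun z : ℝ × ℝ => F z.2 z.1 := hF.comp measurable_swap
    unfold Function.uncurry
    fun_prop
  calc _ ≤ ∫⁻ x, (∫⁻ s, F s x ^ ρ * w s ^ (-(ρ - 1)) ∂μ) * (∫⁻ s, w s ∂μ) ^ (ρ - 1) := lintegral_mono key
    _ = (∫⁻ x, (∫⁻ s, F s x ^ ρ * w s ^ (-(ρ - 1)) ∂μ)) * (∫⁻ s, w s ∂μ) ^ (ρ - 1) :=
      lintegral_mul_const _ (hm2.lintegral_prod_right')
    _ = (∫⁻ s, ∫⁻ x, F s x ^ ρ * w s ^ (-(ρ - 1)) ∂volume ∂μ) * (∫⁻ s, w s ∂μ) ^ (ρ - 1) := by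
      rw [lintegral_lintegral_swap hm2.aemeasurable]
    _ ≤ (∫⁻ s, w s ∂μ) * (∫⁻ s, w s ∂μ) ^ (ρ - 1) := by
      refine mul_le_mul_left ?_ _
      apply lintegral_mono_ae
      filter_upwards [hpos, hb] with s hs hbs
      have := hF2 s
      rw [lintegral_mul_const _ (by fun_prop)]
      calc _ ≤ w s ^ ρ * w s ^ (-(ρ - 1)) := by gcongr
        _ = w s := by rw [← ENNReal.rpow_add _ _ hs.1 hs.2]; simp
    _ = _ := by
      conv_lhs => rw [← ENNReal.rpow_one (∫⁻ s, w s ∂μ), ← ENNReal.rpow_mul, ← ENNReal.rpow_add_of_nonneg _ _ (by norm_num) (by linarith)]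
      congr 1; ring

lemma aux_mink (μ : Measure ℝ) [IsFiniteMeasure μ] (F : ℝ → ℝ → ℝ≥0∞) (hF : Measurable (Function.uncurry F))
    (w : ℝ → ℝ≥0∞) (hw : Measurable w) (ρ : ℝ) (hρ : 1 < ρ)
    (hb : ∀ᵐ s ∂μ, ∫⁻ x, F s x ^ ρ ≤ w s ^ ρ) :
    ∫⁻ x, (∫⁻ s, F s x ∂μ) ^ ρ ≤ (∫⁻ s, w s ∂μ) ^ ρ := by
  have hρ0 : 0 < ρ := by linarith
  by_cases hi : ∫⁻ s, w s ∂μ = ∞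
  · rw [hi, ENNReal.top_rpow_of_pos hρ0]; exact le_top
  have hfin := ae_lt_top hw hi
  have hn : ∀ n : ℕ, ∫⁻ x, (∫⁻ s, F s x ∂μ) ^ ρ ≤ (∫⁻ s, w s ∂μ + ((n:ℝ≥0∞) + 1)⁻¹ * μ univ) ^ ρ := by
    intro n
    have hε : ((n:ℝ≥0∞) + 1)⁻¹ ≠ 0 := by simp
    have hε' : ((n:ℝ≥0∞) + 1)⁻¹ ≠ ∞ := by simp
    have := aux_mink0 μ F hF (fun s => w s + ((n:ℝ≥0∞) + 1)⁻¹) (by fun_prop) ρ hρ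
      (by filter_upwards [hfin] with s hs
          exact ⟨by simp, ENNReal.add_ne_top.2 ⟨hs.ne, hε'⟩⟩)
      (by filter_upwards [hb] with s hs
          refine hs.trans ?_
          gcongr
          exact le_self_add)
    rwa [lintegral_add_left hw, lintegral_const] at this
  have ht : Filter.Tendsto (fun n : ℕ => (∫⁻ s, w s ∂μ + ((n:ℝ≥0∞) + 1)⁻¹ * μ univ) ^ ρ) Filter.atTop
      (nhds ((∫⁻ s, w s ∂μ) ^ ρ)) := by
    apply (ENNReal.continuous_rpow_const.tendsto _).comp
    have h0 : Filter.Tendsto (fun n : ℕ => ((n:ℝ≥0∞) + 1)⁻¹) Filter.atTop (nhds 0) := by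
      have := (Filter.tendsto_add_atTop_iff_nat 1).2 ENNReal.tendsto_inv_nat_nhds_zero
      simpa using this
    have h1 := ENNReal.Tendsto.mul_const (b := μ univ) h0 (Or.inr (measure_ne_top μ _))
    have h2 := (tendsto_const_nhds (x := ∫⁻ s, w s ∂μ)).add h1
    simpa using h2
  exact ge_of_tendsto' ht hn

lemma aux_bath (E : Set ℝ) (hE : MeasurableSet E) (h0 : E ⊆ Ici 0) (hfin : volume E ≠ ∞) (α : ℝ)
    (hα : 0 < α) (hα1 : α < 1) :
    ∫⁻ s in E, ENNReal.ofReal (s ^ (-α)) ≤ ENNReal.ofReal (1 / (1 - α) + 1) * volume E ^ (1 - α) := by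
  by_cases hz : volume E = 0
  · rw [setLIntegral_measure_zero _ _ hz]; exact zero_le
  have h1 : 0 < 1 - α := by linarith
  set m := (volume E).toReal with hm
  have hm0 : 0 < m := ENNReal.toReal_pos hz hfin
  have hEm : volume E = ENNReal.ofReal m := (ENNReal.ofReal_toReal hfin).symm
  have hsub : E ⊆ (Ico 0 m) ∪ (E ∩ Ici m) := by
    intro s hs
    by_cases h : s < m
    · left; exact ⟨h0 hs, h⟩
    · right; exact ⟨hs, not_lt.1 h⟩
  have i1 : ∫⁻ s in Ico 0 m, ENNReal.ofReal (s ^ (-α)) = ENNReal.ofReal (1 / (1 - α)) * ENNReal.ofReal (m ^ (1 - α)) := by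
    rw [← aux_int_pow (1 - α) m h1 hm0.le, setLIntegral_congr Ioo_ae_eq_Ico.symm,
      ← lintegral_const_mul' _ _ ENNReal.ofReal_ne_top]
    congr 1; ext s
    rw [← ENNReal.ofReal_mul (by positivity)]
    congr 1
    have : 1 - α - 1 = -α := by ring
    rw [this]; field_simp
  have i2 : ∫⁻ s in E ∩ Ici m, ENNReal.ofReal (s ^ (-α)) ≤ ENNReal.ofReal (m ^ (1 - α)) := by
    calc _ ≤ ∫⁻ s in E ∩ Ici m, ENNReal.ofReal (m ^ (-α)) := by
          apply setLIntegral_mono' (hE.inter measurableSet_Ici)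
          intro s hs
          apply ENNReal.ofReal_le_ofReal
          exact Real.rpow_le_rpow_of_nonpos hm0 hs.2 (by linarith)
      _ = ENNReal.ofReal (m ^ (-α)) * volume (E ∩ Ici m) := by simp
      _ ≤ ENNReal.ofReal (m ^ (-α)) * ENNReal.ofReal m := by
          rw [← hEm]; gcongr; exact inter_subset_left
      _ = _ := by
          rw [← ENNReal.ofReal_mul (by positivity), ← Real.rpow_add_one hm0.ne']
          congr 2; ring
  calc _ ≤ ∫⁻ s in (Ico 0 m) ∪ (E ∩ Ici m), ENNReal.ofReal (s ^ (-α)) := lintegral_mono_set hsub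
    _ ≤ _ := lintegral_union_le _ _ _
    _ ≤ ENNReal.ofReal (1 / (1 - α)) * ENNReal.ofReal (m ^ (1 - α)) + ENNReal.ofReal (m ^ (1 - α)) := by
      rw [i1]; gcongr
    _ = _ := by
      rw [hEm, ENNReal.ofReal_rpow_of_pos hm0, ENNReal.ofReal_add (by positivity) (by norm_num), add_mul]
      simp

lemma aux_lorentz (I : Set ℝ) (hI : MeasurableSet I) (b : ℝ) (hIb : I ⊆ Icc 0 b) (g : ℝ → ℝ≥0∞) (hg : Measurable g)
    (α : ℝ) (hα : 0 < α) (hα1 : α < 1) (p : ℝ≥0∞) (hp : 1 ≤ p) (hpα : p⁻¹.toReal * 4 = 1 - α) :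
    ∫⁻ s in I, ENNReal.ofReal (s ^ (-α)) * g s ^ (4:ℝ) ≤
      ENNReal.ofReal (4 * (1 / (1 - α) + 1)) * lorentzNorm (volume.restrict I) p 4 g ^ 4 := by
  have h1 : 0 < 1 - α := by linarith
  have hfin : ∀ E ⊆ I, volume E ≠ ∞ := by
    intro E hE
    have := measure_mono (μ := volume) (hE.trans hIb)
    exact ne_top_of_le_ne_top (by simp) this
  have hL : lorentzNorm (volume.restrict I) p 4 g ^ 4 = p * ∫⁻ l in Ioi (0:ℝ),
      ENNReal.ofReal (l ^ ((4:ℝ) - 1)) * (volume.restrict I {x | ENNReal.ofReal l < g x}) ^ (1 - α) := by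
    rw [lorentzNorm, if_neg (by norm_num), ← ENNReal.rpow_natCast, ← ENNReal.rpow_mul]
    have : (4:ℝ≥0∞)⁻¹.toReal * ((4:ℕ):ℝ) = 1 := by norm_num [ENNReal.toReal_inv]
    rw [this, ENNReal.rpow_one]
    congr 1
    apply setLIntegral_congr_fun measurableSet_Ioi
    intro l hl
    have hl : 0 < l := hl
    simp only
    have e4 : (4:ℝ≥0∞).toReal = 4 := by norm_num
    rw [e4, ENNReal.mul_rpow_of_nonneg _ _ (by norm_num), ← ENNReal.rpow_mul, hpα, div_eq_mul_inv, mul_right_comm]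
    congr 1
    rw [ENNReal.ofReal_rpow_of_pos hl, ← ENNReal.ofReal_inv_of_pos hl, ← ENNReal.ofReal_mul (by positivity)]
    congr 1
    rw [Real.rpow_sub_one hl.ne', div_eq_mul_inv]
  rw [hL]
  have hmset : ∀ l : ℝ, MeasurableSet {x | ENNReal.ofReal l < g x} := fun l => measurableSet_lt measurable_const hg
  calc ∫⁻ s in I, ENNReal.ofReal (s ^ (-α)) * g s ^ (4:ℝ)
      ≤ ∫⁻ s in I, ∫⁻ l in Ioi (0:ℝ), ENNReal.ofReal (s ^ (-α)) * (ENNReal.ofReal (4 * l ^ ((4:ℝ)-1)) *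
      (if ENNReal.ofReal l < g s then 1 else 0)) := by
        apply lintegral_mono
        intro s
        simp only
        rw [lintegral_const_mul' _ _ ENNReal.ofReal_ne_top]
        gcongr
        exact aux_layer 4 (by norm_num) _
    _ = ∫⁻ l in Ioi (0:ℝ), ∫⁻ s in I, ENNReal.ofReal (s ^ (-α)) * (ENNReal.ofReal (4 * l ^ ((4:ℝ)-1)) *
      (if ENNReal.ofReal l < g s then 1 else 0)) := by
        apply lintegral_lintegral_swap
        apply Measurable.aemeasurable
        apply Measurable.mul
        · fun_prop
        apply Measurable.mul
        · fun_prop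
        · exact Measurable.ite (measurableSet_lt (by fun_prop) (by fun_prop)) measurable_const measurable_const
    _ = ∫⁻ l in Ioi (0:ℝ), ENNReal.ofReal (4 * l ^ ((4:ℝ)-1)) * ∫⁻ s in {x | ENNReal.ofReal l < g x} ∩ I, ENNReal.ofReal (s ^ (-α)) := by
        congr 1; ext l
        rw [← setLIntegral_indicator (hmset l), ← lintegral_const_mul' _ _ ENNReal.ofReal_ne_top]
        congr 1; ext s
        by_cases h : ENNReal.ofReal l < g s
        · rw [indicator_of_mem (show s ∈ {x | ENNReal.ofReal l < g x} from h), if_pos h]; ring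
        · rw [indicator_of_notMem (show s ∉ {x | ENNReal.ofReal l < g x} from h), if_neg h]; simp
    _ ≤ ∫⁻ l in Ioi (0:ℝ), ENNReal.ofReal (4 * (1 / (1 - α) + 1)) * (ENNReal.ofReal (l ^ ((4:ℝ) - 1)) * (volume.restrict I {x | ENNReal.ofReal l < g x}) ^ (1 - α)) := by
        apply setLIntegral_mono' measurableSet_Ioi
        intro l hl
        have hl : 0 < l := hl
        rw [Measure.restrict_apply (hmset l)]
        have hb := aux_bath ({x | ENNReal.ofReal l < g x} ∩ I) ((hmset l).inter hI)
          (fun s hs => (hIb hs.2).1) (hfin _ inter_subset_right) α hα hα1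
        refine (mul_le_mul_right hb _).trans (le_of_eq ?_)
        rw [ENNReal.ofReal_mul (p := 4) (by norm_num), ENNReal.ofReal_mul (p := 4) (by norm_num)]
        ring
    _ = ENNReal.ofReal (4 * (1 / (1 - α) + 1)) * ∫⁻ l in Ioi (0:ℝ), (ENNReal.ofReal (l ^ ((4:ℝ) - 1)) * (volume.restrict I {x | ENNReal.ofReal l < g x}) ^ (1 - α)) :=
        lintegral_const_mul' _ _ ENNReal.ofReal_ne_top
    _ ≤ _ := by
        gcongr
        exact le_mul_of_one_le_left zero_le hp

lemma aux_fixed (ρ : ℝ) (hρ : 2 < ρ) (q : ℝ≥0∞) (hq : q.toReal = 4 * ρ / (ρ - 2)) (hq0 : q ≠ 0) (hqt : q ≠ ∞) (t s : ℝ) (ht : 0 < t) (hs : s ≤ t / 2)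
    (v : ℝ → ℂ) (hv : Measurable v) :
    ∫⁻ x, ‖schrod 1 (t - s) (nonlin 4 v) x‖ₑ ^ ρ ≤
      (ENNReal.ofReal (((4 * ρ / (ρ - 2) * 2 ^ (ρ - 2)) ^ (1/ρ) * (2 * π) ^ (-(1/2 - 1/ρ))) * t ^ (-(1/2 - 1/ρ))) *
        (eLpNorm v (ENNReal.ofReal ρ) volume * eLpNorm v q volume ^ (4:ℝ))) ^ ρ := by
  have hρ0 : 0 < ρ := by linarith
  have hρ2 : 0 < ρ - 2 := by linarith
  have hT : 0 < t - s := by linarith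
  have hnm : Measurable (nonlin 4 v) := by unfold nonlin; fun_prop
  set D := 4 * ρ / (ρ - 2) * 2 ^ (ρ - 2) with hD
  have hD0 : 0 < D := by positivity
  have e1 : eLpNorm v (ENNReal.ofReal ρ) volume ^ ρ = ∫⁻ x, ‖v x‖ₑ ^ ρ := by
    rw [eLpNorm_eq_lintegral_rpow_enorm_toReal (by simpa using hρ0) (by simp), ENNReal.toReal_ofReal hρ0.le,
      ← ENNReal.rpow_mul, one_div_mul_cancel hρ0.ne', ENNReal.rpow_one]
  have e2 : (eLpNorm v q volume ^ (4:ℝ)) ^ ρ = (∫⁻ x, ‖v x‖ₑ ^ (4 * ρ / (ρ - 2))) ^ (ρ - 2) := by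
    rw [eLpNorm_eq_lintegral_rpow_enorm_toReal hq0 hqt, hq, ← ENNReal.rpow_mul, ← ENNReal.rpow_mul]
    congr 1; field_simp
  rw [ENNReal.mul_rpow_of_nonneg _ _ hρ0.le, ENNReal.mul_rpow_of_nonneg _ _ hρ0.le, e1, e2]
  refine (aux_disp (t - s) hT (nonlin 4 v) hnm ρ hρ).trans ?_
  refine mul_le_mul' ?_ (aux_holder v hv ρ hρ)
  rw [ENNReal.ofReal_rpow_of_pos (by positivity)]
  apply ENNReal.ofReal_le_ofReal
  rw [Real.mul_rpow (x := D ^ (1/ρ) * (2 * π) ^ (-(1/2 - 1/ρ))) (by positivity) (by positivity),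
    Real.mul_rpow (x := D ^ (1/ρ)) (by positivity) (by positivity),
    ← Real.rpow_mul hD0.le, one_div_mul_cancel hρ0.ne', Real.rpow_one, ← Real.rpow_mul (by positivity),
    ← Real.rpow_mul ht.le]
  have e3 : -(1/2 - 1/ρ) * ρ = 1 - ρ / 2 := by field_simp; ring
  rw [e3, mul_assoc D, ← Real.mul_rpow (by positivity) ht.le, ← hD, mul_comm D]
  refine mul_le_mul_of_nonneg_right ?_ hD0.le
  refine Real.rpow_le_rpow_of_nonpos (by positivity) ?_ (by linarith)
  nlinarith [Real.pi_pos]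

lemma aux_fixed_top (t s : ℝ) (ht : 0 < t) (hs : s ≤ t / 2) (v : ℝ → ℂ) (hv : Measurable v) (x : ℝ) :
    ‖schrod 1 (t - s) (nonlin 4 v) x‖ₑ ≤
      ENNReal.ofReal ((2 * π) ^ (-(1/2):ℝ) * t ^ (-(1/2):ℝ)) *
        (eLpNorm v ∞ volume * eLpNorm v 4 volume ^ (4:ℝ)) := by
  refine (aux_disp_top (t - s) (by linarith) _ x).trans ?_
  refine mul_le_mul' ?_ ?_
  · apply ENNReal.ofReal_le_ofReal
    rw [← Real.mul_rpow (by positivity) ht.le]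
    refine Real.rpow_le_rpow_of_nonpos (by positivity) ?_ (by norm_num)
    nlinarith [Real.pi_pos]
  · have e2 : eLpNorm v 4 volume ^ (4:ℝ) = ∫⁻ x, ‖v x‖ₑ ^ (4:ℝ) := by
      rw [eLpNorm_eq_lintegral_rpow_enorm_toReal (by norm_num) (by norm_num), ← ENNReal.rpow_mul]
      norm_num
    rw [e2]
    rw [← lintegral_const_mul _ (by fun_prop)]
    apply lintegral_mono_ae
    filter_upwards [enorm_ae_le_eLpNormEssSup v volume] with y hy
    rw [aux_nonlin, mul_comm]
    gcongr
    rwa [eLpNorm_exponent_top]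

lemma aux_sup (I : Set ℝ) (r : ℝ≥0∞) (α : ℝ) (u : ℝ → ℝ → ℂ) (s : ℝ) (hs : s ∈ I) (hs0 : 0 < s) :
    eLpNorm (u s) r volume ≤ ENNReal.ofReal (s ^ (-α)) *
      ⨆ s ∈ I, ENNReal.ofReal (s ^ α) * eLpNorm (u s) r volume := by
  have h1 : ENNReal.ofReal (s ^ α) * eLpNorm (u s) r volume ≤ ⨆ s ∈ I, ENNReal.ofReal (s ^ α) * eLpNorm (u s) r volume :=
    le_iSup₂ (f := fun s (_ : s ∈ I) => ENNReal.ofReal (s ^ α) * eLpNorm (u s) r volume) s hs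
  refine le_trans (le_of_eq ?_) (mul_le_mul_right h1 _)
  rw [← mul_assoc, ← ENNReal.ofReal_mul (by positivity), ← Real.rpow_add hs0]
  simp

lemma aux_gmeas (u : ℝ → ℝ → ℂ) (hu : Measurable (Function.uncurry u)) (q : ℝ≥0∞) (hq0 : q ≠ 0) (hqt : q ≠ ∞) :
    Measurable fun s => eLpNorm (u s) q volume := by
  simp only [eLpNorm_eq_lintegral_rpow_enorm_toReal hq0 hqt]
  apply Measurable.pow_const
  apply Measurable.lintegral_prod_right (f := fun s x => ‖u s x‖ₑ ^ q.toReal)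
  exact (hu.enorm.pow_const _)

/-- common endgame -/
lemma aux_end (t : ℝ) (I : Set ℝ) (hI : MeasurableSet I) (hIb : I ⊆ Icc 0 (t/2))
    (g : ℝ → ℝ≥0∞) (hg : Measurable g) (α : ℝ) (hα : 0 < α) (hα1 : α < 1) (p : ℝ≥0∞) (hp : 1 ≤ p)
    (hpα : p⁻¹.toReal * 4 = 1 - α) (K : ℝ) (hK : 0 < K) (S : ℝ≥0∞) :
    ∫⁻ s in I, ENNReal.ofReal (K * t ^ (-α)) * (ENNReal.ofReal (s ^ (-α)) * S * g s ^ (4:ℝ)) ≤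
      ENNReal.ofReal ((K * (4 * (1 / (1 - α) + 1))) * t ^ (-α)) * S * lorentzNorm (volume.restrict I) p 4 g ^ 4 := by
  have h1 : 0 < 1 - α := by linarith
  have := aux_lorentz I hI (t/2) hIb g hg α hα hα1 p hp hpα
  calc _ = (ENNReal.ofReal (K * t ^ (-α)) * S) * ∫⁻ s in I, ENNReal.ofReal (s ^ (-α)) * g s ^ (4:ℝ) := by
        rw [← lintegral_const_mul _ (by fun_prop)]
        congr 1; ext s; ring
    _ ≤ _ := mul_le_mul_right this _
    _ = _ := by
      rw [mul_right_comm K, mul_comm (K * t ^ (-α)), ENNReal.ofReal_mul (p := 4 * (1 / (1 - α) + 1)) (by positivity)]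
      ring

lemma aux_ae_pos (I : Set ℝ) (hI : MeasurableSet I) (b : ℝ) (hIb : I ⊆ Icc 0 b) :
    ∀ᵐ s ∂(volume.restrict I), s ∈ I ∧ 0 < s := by
  have h0 : ∀ᵐ s ∂(volume.restrict I), s ≠ 0 := ae_restrict_of_ae (Measure.ae_ne volume 0)
  filter_upwards [ae_restrict_mem hI, h0] with s hs hs0
  exact ⟨hs, lt_of_le_of_ne (hIb hs).1 (Ne.symm hs0)⟩

/-- **One-dimensional early-time Duhamel estimate.**  Fix `2 < r ≤ ∞`.  For any `t > 0`, any
measurable interval `I ⊆ [0, t/2]`, and any measurable `u` on `I × ℝ`,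
`‖∫_I e^{i(t-s)Δ}(|u|⁴u)(s) ds‖_{L^r_x} ≤ C t^{-(1/2-1/r)}
  (sup_{s∈I} s^{1/2-1/r} ‖u(s)‖_{L^r_x}) ‖u‖⁴_{L^{8r/(r+2),4}_s L^{4r/(r-2)}_x(I×ℝ)}`,
with `C = C(r)`.  The exponents are encoded via their reciprocals `(r+2)/(8r) = 1/8 + 1/(4r)`
and `(r-2)/(4r) = 1/4 - 1/(2r)`, which for `r = ∞` give `8` and `4` respectively. -/
theorem early_time_duhamel_1d (r : ℝ≥0∞) (hr : 2 < r) :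
    ∃ C : ℝ, 0 < C ∧
      ∀ t : ℝ, 0 < t →
        ∀ I : Set ℝ, MeasurableSet I → I.OrdConnected → I ⊆ Set.Icc 0 (t / 2) →
          ∀ u : ℝ → ℝ → ℂ, Measurable (Function.uncurry u) →
            eLpNorm (fun x => ∫ s in I, schrod 1 (t - s) (nonlin 4 (u s)) x) r volume ≤
              ENNReal.ofReal (C * t ^ (-(1 / 2 - 1 / r).toReal)) *
                (⨆ s ∈ I, ENNReal.ofReal (s ^ (1 / 2 - 1 / r).toReal) *
                  eLpNorm (u s) r volume) *
                lorentzMixedNorm volume I (1 / 8 + 1 / (4 * r))⁻¹ 4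
                    (1 / 4 - 1 / (2 * r))⁻¹ u ^ 4 := by
  by_cases hrt : r = ∞
  · subst hrt
    have hα : ((1:ℝ≥0∞) / 2 - 1 / ∞).toReal = 1 / 2 := by simp
    have hq : ((1:ℝ≥0∞) / 4 - 1 / (2 * ∞))⁻¹ = 4 := by simp
    have hp : ((1:ℝ≥0∞) / 8 + 1 / (4 * ∞))⁻¹ = 8 := by simp
    rw [hα, hq, hp]
    refine ⟨(2 * π) ^ (-(1/2):ℝ) * (4 * (1 / (1 - 1/2) + 1)), by positivity, ?_⟩
    intro t ht I hI _ hIb u hu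
    set S := ⨆ s ∈ I, ENNReal.ofReal (s ^ (1/2 : ℝ)) * eLpNorm (u s) ∞ volume with hS
    have hend := aux_end t I hI hIb (fun s => eLpNorm (u s) 4 volume) (aux_gmeas u hu 4 (by norm_num) (by norm_num))
      (1/2) (by norm_num) (by norm_num) 8 (by norm_num) (by norm_num [ENNReal.toReal_inv]) ((2 * π) ^ (-(1/2):ℝ)) (by positivity) S
    unfold lorentzMixedNorm
    refine le_trans ?_ hend
    rw [eLpNorm_exponent_top]
    refine eLpNormEssSup_le_of_ae_enorm_bound (ae_of_all _ fun x => ?_)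
    refine (enorm_integral_le_lintegral_enorm _).trans ?_
    apply lintegral_mono_ae
    filter_upwards [aux_ae_pos I hI _ hIb] with s hs
    have hus : Measurable (u s) := hu.comp (by fun_prop : Measurable fun x : ℝ => (s, x))
    refine (aux_fixed_top t s ht (hIb hs.1).2 (u s) hus x).trans ?_
    refine mul_le_mul_right (mul_le_mul_left ?_ _) _
    exact aux_sup I ∞ (1/2) u s hs.1 hs.2
  · set ρ := r.toReal with hρ'
    have hρr : r = ENNReal.ofReal ρ := (ENNReal.ofReal_toReal hrt).symm
    have hρ : 2 < ρ := by
      rw [hρr, show (2:ℝ≥0∞) = ENNReal.ofReal 2 by norm_num] at hr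
      exact (ENNReal.ofReal_lt_ofReal_iff_of_nonneg (by norm_num)).1 hr
    have hρ0 : 0 < ρ := by linarith
    have hρ2 : 0 < ρ - 2 := by linarith
    have i1 : (1:ℝ≥0∞) / r = ENNReal.ofReal (1/ρ) := by
      rw [hρr, ENNReal.ofReal_div_of_pos hρ0, ENNReal.ofReal_one]
    have i2 : (1:ℝ≥0∞) / (2 * r) = ENNReal.ofReal (1/(2*ρ)) := by
      rw [hρr, ENNReal.ofReal_div_of_pos (by positivity), ENNReal.ofReal_one, ENNReal.ofReal_mul (by norm_num)]; norm_num
    have i4 : (1:ℝ≥0∞) / (4 * r) = ENNReal.ofReal (1/(4*ρ)) := by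
      rw [hρr, ENNReal.ofReal_div_of_pos (by positivity), ENNReal.ofReal_one, ENNReal.ofReal_mul (by norm_num)]; norm_num
    have j2 : (1:ℝ≥0∞) / 2 = ENNReal.ofReal (1/2) := by
      rw [ENNReal.ofReal_div_of_pos (by norm_num)]; norm_num
    have j4 : (1:ℝ≥0∞) / 4 = ENNReal.ofReal (1/4) := by
      rw [ENNReal.ofReal_div_of_pos (by norm_num)]; norm_num
    have j8 : (1:ℝ≥0∞) / 8 = ENNReal.ofReal (1/8) := by
      rw [ENNReal.ofReal_div_of_pos (by norm_num)]; norm_num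
    have hlt : 1/ρ < 1/2 := one_div_lt_one_div_of_lt (by norm_num) hρ
    have hpos : 0 < 1/ρ := by positivity
    have hlt2 : 1/(2*ρ) < 1/4 := one_div_lt_one_div_of_lt (by norm_num) (by linarith)
    have hα : ((1:ℝ≥0∞) / 2 - 1 / r).toReal = 1 / 2 - 1/ρ := by
      rw [i1, j2, ← ENNReal.ofReal_sub _ (by positivity), ENNReal.toReal_ofReal (by linarith)]
    have hq : ((1:ℝ≥0∞) / 4 - 1 / (2 * r))⁻¹ = ENNReal.ofReal (4 * ρ / (ρ - 2)) := by
      rw [i2, j4, ← ENNReal.ofReal_sub _ (by positivity), ← ENNReal.ofReal_inv_of_pos (by linarith)]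
      congr 1
      have : (1:ℝ)/4 - 1/(2*ρ) = (ρ - 2) / (4 * ρ) := by field_simp; ring
      rw [this, inv_div]
    set p := ((1:ℝ≥0∞) / 8 + 1 / (4 * r))⁻¹ with hp
    have hpi : p⁻¹ = ENNReal.ofReal (1/8 + 1/(4*ρ)) := by
      rw [hp, inv_inv, i4, j8, ENNReal.ofReal_add (by norm_num) (by positivity)]
    have hp1 : 1 ≤ p := by
      rw [← ENNReal.inv_le_one, hpi]
      rw [ENNReal.ofReal_le_one]
      have : 1/(4*ρ) ≤ 1/4 := one_div_le_one_div_of_le (by norm_num) (by linarith)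
      linarith
    have hpα : p⁻¹.toReal * 4 = 1 - (1/2 - 1/ρ) := by
      rw [hpi, ENNReal.toReal_ofReal (by positivity)]
      field_simp; ring
    rw [hα, hq]
    set q := ENNReal.ofReal (4 * ρ / (ρ - 2)) with hqdef
    have hqr : q.toReal = 4 * ρ / (ρ - 2) := ENNReal.toReal_ofReal (by positivity)
    have hq0 : q ≠ 0 := by
      have : 0 < 4 * ρ / (ρ - 2) := by positivity
      simpa [hqdef] using this
    have hqt : q ≠ ∞ := ENNReal.ofReal_ne_top
    set K := ((4 * ρ / (ρ - 2) * 2 ^ (ρ - 2)) ^ (1/ρ) * (2 * π) ^ (-(1/2 - 1/ρ))) with hK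
    have hK0 : 0 < K := by positivity
    refine ⟨K * (4 * (1 / (1 - (1/2 - 1/ρ)) + 1)), ?_, ?_⟩
    · have : 0 < 1 - (1/2 - 1/ρ) := by linarith
      positivity
    intro t ht I hI _ hIb u hu
    set S := ⨆ s ∈ I, ENNReal.ofReal (s ^ (1/2 - 1/ρ)) * eLpNorm (u s) r volume with hS
    have hgm := aux_gmeas u hu q hq0 hqt
    have hend := aux_end t I hI hIb (fun s => eLpNorm (u s) q volume) hgm
      (1/2 - 1/ρ) (by linarith) (by linarith) p hp1 hpα K hK0 S
    unfold lorentzMixedNorm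
    refine le_trans ?_ hend
    have hfinI : IsFiniteMeasure (volume.restrict I) := by
      refine ⟨?_⟩
      rw [Measure.restrict_apply_univ]
      exact (measure_mono hIb).trans_lt (by simp)
    have hmk := aux_mink (volume.restrict I) _ (aux_meas_schrod t u hu I
        (fun s hs => by have := (hIb hs).2; linarith) hI)
      (fun s => ENNReal.ofReal (K * t ^ (-(1/2 - 1/ρ))) * (ENNReal.ofReal (s ^ (-(1/2 - 1/ρ))) * S * eLpNorm (u s) q volume ^ (4:ℝ)))
      (by fun_prop) ρ (by linarith) (by
        filter_upwards [aux_ae_pos I hI _ hIb] with s hs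
        simp only [indicator_of_mem hs.1]
        have hus : Measurable (u s) := hu.comp (by fun_prop : Measurable fun x : ℝ => (s, x))
        refine (aux_fixed ρ hρ q hqr hq0 hqt t s ht (hIb hs.1).2 (u s) hus).trans ?_
        refine ENNReal.rpow_le_rpow ?_ hρ0.le
        refine mul_le_mul_right (mul_le_mul_left ?_ _) _
        rw [← hρr]
        exact aux_sup I r _ u s hs.1 hs.2)
    rw [eLpNorm_eq_lintegral_rpow_enorm_toReal (by rintro rfl; simp at hr) hrt, ← hρ', one_div ρ,
      ENNReal.rpow_inv_le_iff hρ0, ← one_div]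
    refine le_trans (lintegral_mono fun x => ?_) hmk
    refine ENNReal.rpow_le_rpow ?_ hρ0.le
    refine (enorm_integral_le_lintegral_enorm _).trans (le_of_eq ?_)
    apply setLIntegral_congr_fun hI
    intro s hs
    simp only [indicator_of_mem hs]
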